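/- (Corollary 1, arbitrarily high success probability) In the Gaussian-copula ordinal optimisation model (reduced form), for any fixed m ∈ ℕ, α ∈ (0,1), ρ ∈ (0,1] and any δ ∈ (0,1], there exists a finite n̄ = n̄(α, ρ, δ) ∈ ℕ such that p_success^G(n, m, α, ρ) ≥ 1 − δ for all n ≥ n̄. -/

import Mathlib

/-!
Let `(W_i, V_i)` be the independent standard normals with `Z_i = W_i` and
`X_i = ρ W_i + √(1 - ρ²) V_i`. The index `i` minimising `W` (the smallest one, in case of ties) is
always selected, since `m ≥ 1`. Fix `K ≥ 0` and put `t = (K - q) / ρ`. If `W_i ≤ -t` and `V_i ≤ K`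
at this index, then `X_i ≤ -ρ t + K = q`. So failure forces one of two events:

* every `W_j` exceeds `-t`, which has probability `P(W > -t) ^ n`;
* the noise at the argmin exceeds `K`. The argmin depends only on `W`, which is independent of `V`,
  so by `exceptional_measure_le` this has probability at most `P(V > K)`, uniformly in `n`.

Choosing first `K` and then `n` large makes both at most `δ / 2`. The success event need not be
measurable: subadditivity of the outer measure and `μ (f ⁻¹' s) ≤ μ.map f s` suffice for it.
-/

open MeasureTheory ProbabilityTheory Real

/-- The standard Gaussian CDF `Φ`. -/
noncomputable def stdGaussCDF (x : ℝ) : ℝ := ((gaussianReal 0 1) (Set.Iic x)).toReal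

/-- The law of a bivariate Gaussian vector `(Z, X)` with standard normal marginals and
correlation `ρ`, realised as `(W, ρ W + √(1 − ρ²) V)` for independent standard normals
`W, V`. -/
noncomputable def bivGaussPair (ρ : ℝ) : Measure (ℝ × ℝ) :=
  ((gaussianReal 0 1).prod (gaussianReal 0 1)).map
    (fun p => (p.1, ρ * p.1 + Real.sqrt (1 - ρ ^ 2) * p.2))

/-- The success event: for a sample `v` of `n` pairs `(Z_i, X_i)`, some candidate `i`
whose `Z_i` is among the `m` smallest (i.e. `#{j : Z_j < Z_i} < m`) satisfies `X_i ≤ q`. -/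
def successEvent (n m : ℕ) (q : ℝ) : Set (Fin n → ℝ × ℝ) :=
  {v | ∃ i : Fin n, {j : Fin n | (v j).1 < (v i).1}.ncard < m ∧ (v i).2 ≤ q}

/-- The success probability `p_success^G(n, m, α, ρ)` of the Gaussian-copula ordinal
optimisation model (reduced form), with `q = Φ⁻¹(α)`: the `(Z_i, X_i)`, `i = 1,…,n`,
are i.i.d. bivariate Gaussian with standard normal marginals and correlation `ρ`. -/
noncomputable def psuccG (n m : ℕ) (ρ q : ℝ) : ℝ :=
  ((Measure.pi fun _ : Fin n => bivGaussPair ρ) (successEvent n m q)).toReal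

/-- The vectors whose minimum is attained at `i` and at no smaller index. Breaking ties by index
makes these sets disjoint outright, so that the absence of ties never has to be proved. -/
def firstArgmin (n : ℕ) (i : Fin n) : Set (Fin n → ℝ) :=
  {z | (∀ j, z i ≤ z j) ∧ ∀ j, j < i → z i < z j}

lemma measurableSet_firstArgmin (n : ℕ) (i : Fin n) : MeasurableSet (firstArgmin n i) := by
  unfold firstArgmin
  measurability

lemma pairwise_disjoint_firstArgmin (n : ℕ) :
    Pairwise (Function.onFun Disjoint (firstArgmin n)) := by
  intro i j hij
  refine Set.disjoint_left.2 fun z hi hj => ?_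
  rcases lt_or_gt_of_ne hij with h | h
  · exact absurd (hj.2 i h) (not_lt.2 (hi.1 j))
  · exact absurd (hi.2 j h) (not_lt.2 (hj.1 i))

lemma exists_mem_firstArgmin {n : ℕ} (k : Fin n) (z : Fin n → ℝ) : ∃ i, z ∈ firstArgmin n i := by
  have : Nonempty (Fin n) := ⟨k⟩
  obtain ⟨a, ha⟩ := Finite.exists_min z
  obtain ⟨i, hi, hmin⟩ := wellFounded_lt.has_min {i : Fin n | ∀ j, z i ≤ z j} ⟨a, ha⟩
  refine ⟨i, hi, fun j hj => ?_⟩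
  by_contra! h
  exact hmin j (fun l => h.trans (hi l)) hj

/-- The event containing every failure, for the components `W_i = (p i).1` and `V_i = (p i).2`:
either no `W_i` is at most `-t`, or the noise `V_i` at the first argmin `i` of `W` exceeds `K`. -/
def exceptionalEvent (n : ℕ) (t K : ℝ) : Set (Fin n → ℝ × ℝ) :=
  {p | ∀ i, -t < (p i).1} ∪ ⋃ i, {p | (fun j => (p j).1) ∈ firstArgmin n i ∧ K < (p i).2}

/-- Since the first argmin is a function of the first components alone, the second component it
picks out is distributed as a single draw, whatever `n` is. -/
lemma exceptional_measure_le (μ ν : Measure ℝ) [IsProbabilityMeasure μ] [IsProbabilityMeasure ν]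
    (n : ℕ) (t K : ℝ) :
    (Measure.pi fun _ : Fin n => μ.prod ν) (exceptionalEvent n t K)
      ≤ μ (Set.Ioi (-t)) ^ n + ν (Set.Ioi K) := by
  have hmp := measurePreserving_arrowProdEquivProdArrow ℝ ℝ (Fin n) (fun _ => μ) (fun _ => ν)
  refine (measure_union_le _ _).trans (add_le_add ?_ ?_)
  · have h : {p : Fin n → ℝ × ℝ | ∀ i, -t < (p i).1}
        = Set.univ.pi fun _ => Set.Ioi (-t) ×ˢ Set.univ := by
      ext p; simp [Set.mem_pi]
    rw [h, Measure.pi_pi]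
    simp [Measure.prod_prod]
  · have hi (i : Fin n) : (Measure.pi fun _ : Fin n => μ.prod ν)
          {p | (fun j => (p j).1) ∈ firstArgmin n i ∧ K < (p i).2}
        = (Measure.pi fun _ : Fin n => μ) (firstArgmin n i) * ν (Set.Ioi K) := by
      have hpre : {p : Fin n → ℝ × ℝ | (fun j => (p j).1) ∈ firstArgmin n i ∧ K < (p i).2}
          = MeasurableEquiv.arrowProdEquivProdArrow ℝ ℝ (Fin n) ⁻¹'
            (firstArgmin n i ×ˢ (Function.eval i ⁻¹' Set.Ioi K)) := rfl
      rw [hpre, hmp.measure_preimage_equiv, Measure.prod_prod,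
        (measurePreserving_eval (fun _ : Fin n => ν) i).measure_preimage
          measurableSet_Ioi.nullMeasurableSet]
    refine (measure_iUnion_le _).trans ?_
    simp_rw [hi]
    rw [ENNReal.tsum_mul_right,
      ← measure_iUnion (pairwise_disjoint_firstArgmin n) (measurableSet_firstArgmin n)]
    exact mul_le_of_le_one_left' prob_le_one

lemma exists_gaussian_tail_lt {ε : ENNReal} (hε : 0 < ε) :
    ∃ K : ℝ, 0 ≤ K ∧ gaussianReal 0 1 (Set.Ioi K) < ε := by
  have h : Filter.Tendsto (fun K : ℝ => gaussianReal 0 1 (Set.Ioi K)) Filter.atTop (nhds 0) := by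
    have := tendsto_measure_iInter_atTop (μ := gaussianReal 0 1) (s := fun K : ℝ => Set.Ioi K)
      (fun _ => measurableSet_Ioi.nullMeasurableSet) (fun _ _ h => Set.Ioi_subset_Ioi h)
      ⟨0, measure_ne_top _ _⟩
    have he : ⋂ K : ℝ, Set.Ioi K = ∅ :=
      Set.eq_empty_of_forall_notMem fun x hx => lt_irrefl x (Set.mem_iInter.1 hx x)
    rw [he, measure_empty] at this
    exact this
  exact ((Filter.eventually_ge_atTop 0).and (h.eventually (gt_mem_nhds hε))).exists

lemma gaussian_Ioi_lt_one (a : ℝ) : gaussianReal 0 1 (Set.Ioi a) < 1 := by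
  have h0 : gaussianReal 0 1 (Set.Iic a) ≠ 0 := fun h => by
    have := gaussianReal_absolutelyContinuous' 0 one_ne_zero h
    simp at this
  have := prob_compl_eq_one_sub (μ := gaussianReal 0 1) (measurableSet_Iic (a := a))
  rw [Set.compl_Iic] at this
  rw [this]
  exact ENNReal.sub_lt_self ENNReal.one_ne_top one_ne_zero h0

/-- Outside `exceptionalEvent`, the first argmin is a selected index with `X_i ≤ q`. -/
lemma mem_successEvent_of_notMem {n m : ℕ} (hm : 1 ≤ m) {ρ q t K : ℝ} (hρ : 0 ≤ ρ) (hK : 0 ≤ K)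
    (ht : ρ * t = K - q) {p : Fin n → ℝ × ℝ} (hp : p ∉ exceptionalEvent n t K) :
    (fun i => ((p i).1, ρ * (p i).1 + √(1 - ρ ^ 2) * (p i).2)) ∈ successEvent n m q := by
  simp only [exceptionalEvent, Set.mem_union, Set.mem_iUnion, Set.mem_ofPred_eq, not_or, not_exists,
    not_and, not_forall, not_lt] at hp
  obtain ⟨⟨k, hk⟩, h⟩ := hp
  obtain ⟨i, hi⟩ := exists_mem_firstArgmin k fun j => (p j).1
  refine ⟨i, ?_, ?_⟩
  · have : {j : Fin n | (p j).1 < (p i).1} = ∅ :=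
      Set.eq_empty_of_forall_notMem fun j hj => absurd hj (not_lt.2 (hi.1 j))
    simpa [this] using Nat.lt_of_lt_of_le Nat.zero_lt_one hm
  · have hW : (p i).1 ≤ -t := (hi.1 k).trans hk
    have hs : √(1 - ρ ^ 2) ≤ 1 := Real.sqrt_le_one.2 (by nlinarith)
    have h1 := mul_le_mul_of_nonneg_left hW hρ
    have h2 := mul_le_mul_of_nonneg_left (h i hi) (Real.sqrt_nonneg (1 - ρ ^ 2))
    have h3 := mul_le_mul_of_nonneg_right hs hK
    change ρ * (p i).1 + √(1 - ρ ^ 2) * (p i).2 ≤ q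
    linarith

/-- Corollary 1 (arbitrarily high success probability): for fixed `m ≥ 1`, `α ∈ (0,1)`,
`ρ ∈ (0,1]` and any `δ ∈ (0,1]`, there is a finite `n̄ = n̄(α, ρ, δ)` such that
`p_success^G(n, m, α, ρ) ≥ 1 − δ` for all `n ≥ n̄`. -/
theorem psuccG_high_probability_guarantee (m : ℕ) (hm : 1 ≤ m)
    (α ρ : ℝ) (hα : α ∈ Set.Ioo (0 : ℝ) 1) (hρ : ρ ∈ Set.Ioc (0 : ℝ) 1)
    (q : ℝ) (hq : stdGaussCDF q = α)
    (δ : ℝ) (hδ : δ ∈ Set.Ioc (0 : ℝ) 1) :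
    ∃ nbar : ℕ, ∀ n : ℕ, nbar ≤ n → 1 - δ ≤ psuccG n m ρ q := by
  obtain ⟨hρ0, -⟩ := hρ
  have hε : 0 < ENNReal.ofReal (δ / 2) := ENNReal.ofReal_pos.2 (half_pos hδ.1)
  obtain ⟨K, hK, hKε⟩ := exists_gaussian_tail_lt hε
  set t := (K - q) / ρ with ht
  obtain ⟨N, hN⟩ := Filter.eventually_atTop.1 ((ENNReal.tendsto_pow_atTop_nhds_zero_of_lt_one
    (gaussian_Ioi_lt_one (-t))).eventually (gt_mem_nhds hε))
  refine ⟨N, fun n hn => ?_⟩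
  set P := Measure.pi fun _ : Fin n => (gaussianReal 0 1).prod (gaussianReal 0 1) with hP
  have hf : Measurable fun p : ℝ × ℝ => (p.1, ρ * p.1 + √(1 - ρ ^ 2) * p.2) := by fun_prop
  have hbiv : IsProbabilityMeasure (bivGaussPair ρ) :=
    Measure.isProbabilityMeasure_map hf.aemeasurable
  set F : (Fin n → ℝ × ℝ) → Fin n → ℝ × ℝ :=
    fun p i => ((p i).1, ρ * (p i).1 + √(1 - ρ ^ 2) * (p i).2) with hFdef
  have hF : Measurable F := by fun_prop
  have hmap : (Measure.pi fun _ : Fin n => bivGaussPair ρ) = P.map F :=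
    (Measure.pi_map_pi (hμ := fun _ => by
      have := Measure.isProbabilityMeasure_map (μ := (gaussianReal 0 1).prod (gaussianReal 0 1))
        hf.aemeasurable
      infer_instance) fun _ => hf.aemeasurable).symm
  have hsub : (F ⁻¹' successEvent n m q)ᶜ ⊆ exceptionalEvent n t K := fun p hp => by
    by_contra h
    exact hp (mem_successEvent_of_notMem hm hρ0.le hK (by rw [ht]; field_simp) h)
  have hbad : P (exceptionalEvent n t K) ≤ ENNReal.ofReal δ := by
    refine (exceptional_measure_le _ _ n t K).trans ((add_le_add (hN n hn).le hKε.le).trans ?_)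
    rw [← ENNReal.ofReal_add (half_pos hδ.1).le (half_pos hδ.1).le, add_halves]
  have hone : 1 ≤ P (F ⁻¹' successEvent n m q) + ENNReal.ofReal δ := calc
    (1 : ENNReal) = P Set.univ := measure_univ.symm
    _ ≤ P (F ⁻¹' successEvent n m q) + P (F ⁻¹' successEvent n m q)ᶜ := by
      rw [← Set.union_compl_self (F ⁻¹' successEvent n m q)]
      exact measure_union_le _ _
    _ ≤ _ := by gcongr; exact (measure_mono hsub).trans hbad
  unfold psuccG
  refine (ENNReal.ofReal_le_iff_le_toReal (measure_ne_top _ _)).1 ?_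
  rw [ENNReal.ofReal_sub _ hδ.1.le, ENNReal.ofReal_one, hmap]
  exact (tsub_le_iff_right.2 hone).trans (Measure.le_map_apply hF.aemeasurable _)
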